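/- Let κ₁, κ₂ be contractions and μ a merger between nested graphs such that the composite μ ∘ κ₂ ∘ κ₁ is defined. Then μ ∘ (κ₂ ∘ κ₁) = (μ ∘ κ₂) ∘ κ₁ as morphisms of the category NGr of nested graphs; that is, the canonical merger–contraction decomposition of μ ∘ (κ₂ ∘ κ₁) coincides with the decomposition obtained by first canonically decomposing μ ∘ κ₂ as κ' ∘ μ' and then canonically decomposing μ' ∘ κ₁ and composing the resulting contractions. -/

import Mathlib

open CategoryTheory

universe v u

/-- A morphism in a category is an identity morphism (up to `eqToHom`). -/
def IsId {C : Type u} [Category.{v} C] {A B : C} (f : A ⟶ B) : Prop :=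
  ∃ h : A = B, f = eqToHom h

/-- A flag in a nested graph is a non-identity morphism. -/
def IsFlag {C : Type u} [Category.{v} C] {A B : C} (f : A ⟶ B) : Prop :=
  ¬ IsId f

/-- An irreducible flag is a flag that cannot be written as the composite of two flags. -/
def IsIrred {C : Type u} [Category.{v} C] {A B : C} (f : A ⟶ B) : Prop :=
  IsFlag f ∧ ¬ ∃ (X : C) (g : A ⟶ X) (h : X ⟶ B), IsFlag g ∧ IsFlag h ∧ g ≫ h = f

/-- A grading: a functor to the finite ordinal `Fin n` (viewed as a preorder category)
sending every non-identity morphism to a non-identity morphism. -/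
def IsGrading {C : Type u} [Category.{v} C] {n : ℕ} (G : C ⥤ Fin n) : Prop :=
  ∀ ⦃A B : C⦄ (f : A ⟶ B), IsFlag f → IsFlag (G.map f)

/-- A nested graph: a category admitting a grading into some finite ordinal. -/
def IsNestedGraph (C : Type u) [Category.{v} C] : Prop :=
  ∃ (n : ℕ) (G : C ⥤ Fin n), IsGrading G

/-- A functor `φ` contracts a flag `f` if `φ.map f` is an identity. -/
def Contracts {C D : Type u} [Category.{v} C] [Category.{v} D]
    (φ : C ⥤ D) {A B : C} (f : A ⟶ B) : Prop :=
  IsId (φ.map f)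

/-- An admissible functor: it maps irreducible flags to identities or irreducible flags,
and whenever it contracts an irreducible flag with domain `A`, it contracts every
irreducible flag with domain `A`. -/
def IsAdmissible {C D : Type u} [Category.{v} C] [Category.{v} D] (φ : C ⥤ D) : Prop :=
  (∀ ⦃A B : C⦄ (f : A ⟶ B), IsIrred f → IsId (φ.map f) ∨ IsIrred (φ.map f)) ∧
  (∀ ⦃A B B' : C⦄ (f : A ⟶ B) (g : A ⟶ B'), IsIrred f → IsIrred g →
      Contracts φ f → Contracts φ g)

/-- The morphisms of the codomain generated by the image of a functor. -/
inductive GenBy {C D : Type u} [Category.{v} C] [Category.{v} D] (φ : C ⥤ D) :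
    ∀ {X Y : D}, (X ⟶ Y) → Prop
  | id (X : D) : GenBy φ (𝟙 X)
  | map {A B : C} (f : A ⟶ B) : GenBy φ (φ.map f)
  | comp {X Y Z : D} (f : X ⟶ Y) (g : Y ⟶ Z) :
      GenBy φ f → GenBy φ g → GenBy φ (f ≫ g)

/-- An epi-functor: its image generates the codomain. -/
def IsEpiFunctor {C D : Type u} [Category.{v} C] [Category.{v} D] (φ : C ⥤ D) : Prop :=
  Function.Surjective φ.obj ∧ ∀ ⦃X Y : D⦄ (f : X ⟶ Y), GenBy φ f

/-- `μ : C ⥤ D` exhibits `D` as the quotient of `C` identifying `r`-related objects,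
with morphisms freely generated by the morphisms of `C` subject to the composition
relations of `C` (expressed via the universal property). -/
def IsQuotientBy {C D : Type u} [Category.{v} C] [Category.{v} D]
    (r : C → C → Prop) (μ : C ⥤ D) : Prop :=
  (∀ A B : C, μ.obj A = μ.obj B ↔ Relation.EqvGen r A B) ∧
  Function.Surjective μ.obj ∧
  (∀ ⦃X Y : D⦄ (f : X ⟶ Y), GenBy μ f) ∧
  (∀ (E : Type u) [Category.{v} E] (F : C ⥤ E),
      (∀ A B : C, r A B → F.obj A = F.obj B) → ∃! F' : D ⥤ E, μ ⋙ F' = F)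

/-- A merger: an admissible epi-functor exhibiting its codomain as the quotient of its
domain by an equivalence relation on objects, with morphisms freely generated subject to
the composition relations of the domain. -/
def IsMerger {C D : Type u} [Category.{v} C] [Category.{v} D] (μ : C ⥤ D) : Prop :=
  IsAdmissible μ ∧ IsEpiFunctor μ ∧
    ∃ r : C → C → Prop, Equivalence r ∧ IsQuotientBy r μ

/-- `A` is a vertex of its fiber under `φ`: it is not the domain of any flag
contracted by `φ`. -/
def IsVertexOver {C D : Type u} [Category.{v} C] [Category.{v} D]
    (φ : C ⥤ D) (A : C) : Prop :=
  ∀ ⦃B : C⦄ (f : A ⟶ B), Contracts φ f → IsId f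

/-- `A₁` is a vertex of the fiber of `φ` over `A₂`. -/
def IsFiberVertex {C D : Type u} [Category.{v} C] [Category.{v} D]
    (φ : C ⥤ D) (A₂ : D) (A₁ : C) : Prop :=
  φ.obj A₁ = A₂ ∧ IsVertexOver φ A₁

/-- A contraction: an admissible epi-functor each of whose fibers is a corolla,
i.e. has a unique vertex. -/
def IsContraction {C D : Type u} [Category.{v} C] [Category.{v} D] (κ : C ⥤ D) : Prop :=
  IsAdmissible κ ∧ IsEpiFunctor κ ∧ ∀ A₂ : D, ∃! A₁ : C, IsFiberVertex κ A₂ A₁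

/-- The canonical merger relation of `φ`: it relates distinct objects `A ≠ B` exactly when
`φ A = φ B` and both `A` and `B` are vertices of the fiber of `φ` over `φ A`. -/
def mergerRel {C D : Type u} [Category.{v} C] [Category.{v} D] (φ : C ⥤ D) :
    C → C → Prop :=
  fun A B => A ≠ B ∧ φ.obj A = φ.obj B ∧ IsVertexOver φ A ∧ IsVertexOver φ B

/-- A canonical merger–contraction decomposition of `φ`: the merger part is the quotient
of the domain identifying, within each fiber of `φ`, all objects that are vertices of that
fiber. -/
def IsCanonicalDecomp {C P D : Type u} [Category.{v} C] [Category.{v} P] [Category.{v} D]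
    (φ : C ⥤ D) (μ : C ⥤ P) (κ : P ⥤ D) : Prop :=
  IsQuotientBy (mergerRel φ) μ ∧ μ ⋙ κ = φ

/-- Two merger–contraction pairs are equal as morphisms of nested graphs: one is obtained
from the other by shifting an isomorphism from the merger to the contraction. -/
def PairEquiv {A B P P' : Type u} [Category.{v} A] [Category.{v} B]
    [Category.{v} P] [Category.{v} P']
    (μ : A ⥤ P) (κ : P ⥤ B) (μ' : A ⥤ P') (κ' : P' ⥤ B) : Prop :=
  ∃ (e : P ⥤ P') (e' : P' ⥤ P), e ⋙ e' = 𝟭 P ∧ e' ⋙ e = 𝟭 P' ∧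
    μ ⋙ e = μ' ∧ e ⋙ κ' = κ

/-- A category contains no cycle of flags. -/
def NoFlagCycles (C : Type u) [Category.{v} C] : Prop :=
  ∀ (k : ℕ), 0 < k → ∀ (obj : Fin (k + 1) → C)
    (flag : ∀ i : Fin k, obj i.castSucc ⟶ obj i.succ),
    (∀ i, IsFlag (flag i)) → obj 0 ≠ obj (Fin.last k)

/-!
Put `κ = κ₁` and `φ = κ₂ ⋙ μ`. The canonical merger relation of `κ ⋙ φ` equals that of `κ ⋙ μ'`,
where `μ'` is the merger part of the canonical decomposition of `φ`; so `(ρ, σ)` and `(ν, lam ⋙ κ')`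
factor the same functor through quotients by the same relation, and the universal property
identifies them.

The relations agree because a vertex `A` of a fiber of `κ ⋙ φ` is the same thing as a vertex of
a fiber of `κ` whose image is a vertex of a fiber of `φ`. Here the image is a vertex because a flag
leaving `κ A` starts with the image of a flag leaving some `A'` in the same fiber of `κ`. As long as
`A'` is not the vertex `A` of that fiber, admissibility forces the first irreducible factor of the
flag to be contracted, so it can be discarded; acyclicity makes this procedure end at `A`.
-/

section

variable {C D E : Type u} [Category.{v} C] [Category.{v} D] [Category.{v} E]

theorem isId_eqToHom {X Y : C} (h : X = Y) : IsId (eqToHom h) := ⟨h, rfl⟩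

theorem IsId.comp {X Y Z : C} {f : X ⟶ Y} {g : Y ⟶ Z} (hf : IsId f) (hg : IsId g) :
    IsId (f ≫ g) := by
  obtain ⟨rfl, rfl⟩ := hf
  obtain ⟨rfl, rfl⟩ := hg
  exact ⟨rfl, by simp⟩

theorem IsId.map (φ : C ⥤ D) {X Y : C} {f : X ⟶ Y} (hf : IsId f) : IsId (φ.map f) := by
  obtain ⟨rfl, rfl⟩ := hf
  exact ⟨rfl, by simp⟩

theorem IsGrading.obj_lt_obj {n : ℕ} {G : C ⥤ Fin n} (hG : IsGrading G) {X Y : C} {f : X ⟶ Y}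
    (hf : IsFlag f) : G.obj X < G.obj Y :=
  lt_of_le_of_ne (leOfHom (G.map f)) fun h => hG f hf ⟨h, Subsingleton.elim _ _⟩

theorem IsNestedGraph.isId_left_of_isId_comp (hC : IsNestedGraph C) {X Y Z : C} {f : X ⟶ Y}
    {g : Y ⟶ Z} (h : IsId (f ≫ g)) : IsId f := by
  obtain ⟨n, G, hG⟩ := hC
  obtain ⟨rfl, -⟩ := h
  by_contra hf
  exact (hG.obj_lt_obj hf).not_ge (leOfHom (G.map g))

theorem IsNestedGraph.contracts_left_of_contracts_comp (hD : IsNestedGraph D) {φ : C ⥤ D}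
    {X Y Z : C} {f : X ⟶ Y} {g : Y ⟶ Z} (h : Contracts φ (f ≫ g)) : Contracts φ f := by
  rw [Contracts, φ.map_comp] at h
  exact hD.isId_left_of_isId_comp h

theorem IsNestedGraph.exists_isIrred_comp_eq (hC : IsNestedGraph C) {X Y : C} (f : X ⟶ Y)
    (hf : IsFlag f) : ∃ (Z : C) (p : X ⟶ Z) (q : Z ⟶ Y), IsIrred p ∧ p ≫ q = f := by
  obtain ⟨n, G, hG⟩ := hC
  induction hk : G.obj Y using WellFoundedLT.induction generalizing Y with
  | ind k ih =>
    by_cases hirred : IsIrred f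
    · exact ⟨Y, f, 𝟙 Y, hirred, Category.comp_id f⟩
    · obtain ⟨W, g, h, hg, hh, rfl⟩ := not_not.mp fun hne => hirred ⟨hf, hne⟩
      obtain ⟨Z, p, q, hp, rfl⟩ := ih (G.obj W) (hk ▸ hG.obj_lt_obj hh) g hg rfl
      exact ⟨Z, p, q ≫ h, hp, (Category.assoc p q h).symm⟩

theorem GenBy.exists_map_comp_eq {φ : C ⥤ D} {X Y : D} {f : X ⟶ Y} (h : GenBy φ f)
    (hf : IsFlag f) : ∃ (A B : C) (g : A ⟶ B) (hA : X = φ.obj A) (r : φ.obj B ⟶ Y),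
      IsFlag (φ.map g) ∧ eqToHom hA ≫ φ.map g ≫ r = f := by
  induction h with
  | id X => exact absurd (isId_eqToHom rfl) hf
  | map g => exact ⟨_, _, g, rfl, 𝟙 _, hf, by simp⟩
  | @comp X Y Z f₁ f₂ _ _ ih₁ ih₂ =>
    by_cases hf₁ : IsFlag f₁
    · obtain ⟨A, B, g, hA, r, hg, rfl⟩ := ih₁ hf₁
      exact ⟨A, B, g, hA, r ≫ f₂, hg, by simp⟩
    · obtain ⟨rfl, rfl⟩ := not_not.mp hf₁
      obtain ⟨A, B, g, hA, r, hg, rfl⟩ := ih₂ fun hf₂ => hf ((isId_eqToHom rfl).comp hf₂)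
      exact ⟨A, B, g, hA, r, hg, by simp⟩

theorem IsVertexOver.of_comp {φ : C ⥤ D} {ψ : D ⥤ E} {A : C} (h : IsVertexOver (φ ⋙ ψ) A) :
    IsVertexOver φ A :=
  fun _ f hf => h f (IsId.map ψ hf)

theorem IsVertexOver.comp {φ : C ⥤ D} {ψ : D ⥤ E} {A : C} (hφ : IsVertexOver φ A)
    (hψ : IsVertexOver ψ (φ.obj A)) : IsVertexOver (φ ⋙ ψ) A :=
  fun _ f hf => hφ f (hψ (φ.map f) hf)

theorem IsAdmissible.exists_contracts_comp_eq {φ : C ⥤ D} (hφ : IsAdmissible φ)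
    (hC : IsNestedGraph C) (hD : IsNestedGraph D) {A B : C} (hA : ¬ IsVertexOver φ A)
    (g : A ⟶ B) (hg : IsFlag g) :
    ∃ (A' : C) (p : A ⟶ A') (q : A' ⟶ B), IsFlag p ∧ Contracts φ p ∧ p ≫ q = g := by
  obtain ⟨Z, c, hcφ, hc⟩ : ∃ (Z : C) (c : A ⟶ Z), Contracts φ c ∧ IsFlag c := by
    simpa only [IsVertexOver, IsFlag, not_forall, exists_prop] using hA
  obtain ⟨W, s, t, hs, rfl⟩ := hC.exists_isIrred_comp_eq c hc
  obtain ⟨A', p, q, hp, rfl⟩ := hC.exists_isIrred_comp_eq g hg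
  have hsφ : Contracts φ s := hD.contracts_left_of_contracts_comp hcφ
  exact ⟨A', p, q, hp.1, hφ.2 s p hs hp hsφ, rfl⟩

namespace IsContraction

variable {κ : C ⥤ D}

theorem eq_of_isVertexOver (hκ : IsContraction κ) {A B : C} (hA : IsVertexOver κ A)
    (hB : IsVertexOver κ B) (h : κ.obj A = κ.obj B) : A = B :=
  (hκ.2.2 (κ.obj B)).unique ⟨h, hA⟩ ⟨rfl, hB⟩

theorem exists_map_eq_of_isVertexOver (hκ : IsContraction κ) (hC : IsNestedGraph C)
    (hD : IsNestedGraph D) {A A' B : C} (hA : IsVertexOver κ A) (g : A' ⟶ B)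
    (hg : IsFlag (κ.map g)) (h : κ.obj A = κ.obj A') :
    ∃ g' : A ⟶ B, κ.map g' = eqToHom h ≫ κ.map g := by
  obtain ⟨n, G, hG⟩ := id hC
  induction hk : G.obj A' using WellFoundedGT.induction generalizing A' with
  | ind k ih =>
    by_cases hA' : IsVertexOver κ A'
    · obtain rfl := hκ.eq_of_isVertexOver hA hA' h
      exact ⟨g, by simp⟩
    · obtain ⟨Y, p, q, hp, ⟨hY, hpκ⟩, rfl⟩ :=
        hκ.1.exists_contracts_comp_eq hC hD hA' g fun hid => hg (hid.map κ)
      have hq : IsFlag (κ.map q) := fun hid =>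
        hg (κ.map_comp p q ▸ IsId.comp ⟨hY, hpκ⟩ hid)
      obtain ⟨g', hg'⟩ := ih (G.obj Y) (hk ▸ hG.obj_lt_obj hp) q hq (h.trans hY) rfl
      exact ⟨g', by rw [hg', κ.map_comp, hpκ, eqToHom_trans_assoc]⟩

theorem exists_map_comp_eq_of_isVertexOver (hκ : IsContraction κ) (hC : IsNestedGraph C)
    (hD : IsNestedGraph D) {A : C} (hA : IsVertexOver κ A) {Y : D} (f : κ.obj A ⟶ Y)
    (hf : IsFlag f) :
    ∃ (B : C) (g : A ⟶ B) (r : κ.obj B ⟶ Y), IsFlag g ∧ κ.map g ≫ r = f := by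
  obtain ⟨A', B, g, h, r, hg, rfl⟩ := (hκ.2.1.2 f).exists_map_comp_eq hf
  obtain ⟨g', hg'⟩ := hκ.exists_map_eq_of_isVertexOver hC hD hA g hg h
  refine ⟨B, g', r, fun hid => hg ?_, by rw [hg', Category.assoc]⟩
  have hmap : κ.map g = eqToHom h.symm ≫ κ.map g' := by simp [hg']
  exact hmap ▸ (isId_eqToHom h.symm).comp (hid.map κ)

theorem isVertexOver_comp_iff (hκ : IsContraction κ) (hC : IsNestedGraph C)
    (hD : IsNestedGraph D) (hE : IsNestedGraph E) {φ : D ⥤ E} {A : C} :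
    IsVertexOver (κ ⋙ φ) A ↔ IsVertexOver κ A ∧ IsVertexOver φ (κ.obj A) := by
  refine ⟨fun hA => ⟨hA.of_comp, fun Y f hf => ?_⟩, fun h => h.1.comp h.2⟩
  by_contra hflag
  obtain ⟨B, g, r, hg, rfl⟩ := hκ.exists_map_comp_eq_of_isVertexOver hC hD hA.of_comp f hflag
  have hgφ : Contracts φ (κ.map g) := hE.contracts_left_of_contracts_comp hf
  exact hg (hA g hgφ)

end IsContraction

theorem eqvGen_mergerRel_iff {φ : C ⥤ D} {A B : C} :
    Relation.EqvGen (mergerRel φ) A B ↔ A = B ∨ mergerRel φ A B := by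
  constructor
  · intro h
    induction h with
    | rel _ _ h => exact .inr h
    | refl _ => exact .inl rfl
    | symm _ _ _ ih => exact ih.imp Eq.symm fun ⟨hne, h, hA, hB⟩ => ⟨hne.symm, h.symm, hB, hA⟩
    | trans A B C _ _ ihAB ihBC =>
      rcases ihAB with rfl | hAB
      · exact ihBC
      · rcases ihBC with rfl | ⟨-, hBC, -, hC⟩
        · exact .inr hAB
        · obtain ⟨-, hAB, hA, -⟩ := hAB
          exact (eq_or_ne A C).imp_right fun hne => ⟨hne, hAB.trans hBC, hA, hC⟩
  · rintro (rfl | h)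
    · exact .refl A
    · exact .rel A B h

namespace IsQuotientBy

variable {P : Type u} [Category.{v} P] {r : C → C → Prop} {μ : C ⥤ P}

theorem obj_eq (h : IsQuotientBy r μ) (A B : C) (hr : r A B) : μ.obj A = μ.obj B :=
  (h.1 A B).2 (.rel A B hr)

theorem functor_ext (h : IsQuotientBy r μ) {F F' : P ⥤ E} (hF : μ ⋙ F = μ ⋙ F') : F = F' :=
  (h.2.2.2 E (μ ⋙ F') fun A B hr => congrArg F'.obj (h.obj_eq A B hr)).unique hF rfl

theorem pairEquiv {P' : Type u} [Category.{v} P'] {μ' : C ⥤ P'} (h : IsQuotientBy r μ)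
    (h' : IsQuotientBy r μ') {κ : P ⥤ D} {κ' : P' ⥤ D} (hcomp : μ ⋙ κ = μ' ⋙ κ') :
    PairEquiv μ κ μ' κ' := by
  obtain ⟨e, he, -⟩ := h.2.2.2 P' μ' h'.obj_eq
  obtain ⟨e', he', -⟩ := h'.2.2.2 P μ h.obj_eq
  refine ⟨e, e', h.functor_ext ?_, h'.functor_ext ?_, he, h.functor_ext ?_⟩
  · rw [← Functor.assoc, he, he', Functor.comp_id]
  · rw [← Functor.assoc, he', he, Functor.comp_id]
  · rw [← Functor.assoc, he, hcomp]

end IsQuotientBy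

theorem IsCanonicalDecomp.obj_eq_iff {P : Type u} [Category.{v} P] {φ : C ⥤ D} {μ : C ⥤ P}
    {κ : P ⥤ D} (hd : IsCanonicalDecomp φ μ κ) {A B : C} :
    μ.obj A = μ.obj B ↔ A = B ∨ mergerRel φ A B :=
  (hd.1.1 A B).trans eqvGen_mergerRel_iff

theorem IsContraction.mergerRel_comp_eq {P : Type u} [Category.{v} P] {κ : C ⥤ D}
    (hκ : IsContraction κ) (hC : IsNestedGraph C) (hD : IsNestedGraph D) (hE : IsNestedGraph E)
    {φ : D ⥤ E} {μ : D ⥤ P} {κ' : P ⥤ E} (hd : IsCanonicalDecomp φ μ κ') :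
    mergerRel (κ ⋙ φ) = mergerRel (κ ⋙ μ) := by
  have vertex_iff {A : C} := hκ.isVertexOver_comp_iff hC hD hE (φ := φ) (A := A)
  have vertex_of_vertex {A : C} (hA : IsVertexOver (κ ⋙ φ) A) : IsVertexOver (κ ⋙ μ) A := by
    rw [← hd.2, ← Functor.assoc] at hA
    exact hA.of_comp
  ext A B
  constructor
  · rintro ⟨hne, hobj, hA, hB⟩
    refine ⟨hne, hd.obj_eq_iff.2 ?_, vertex_of_vertex hA, vertex_of_vertex hB⟩
    exact (eq_or_ne _ _).imp_right fun hκne =>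
      ⟨hκne, hobj, (vertex_iff.1 hA).2, (vertex_iff.1 hB).2⟩
  · rintro ⟨hne, hobj, hA, hB⟩
    have hκne : κ.obj A ≠ κ.obj B := fun h =>
      hne (hκ.eq_of_isVertexOver hA.of_comp hB.of_comp h)
    obtain ⟨-, hobjφ, hAφ, hBφ⟩ := (hd.obj_eq_iff.1 hobj).resolve_left hκne
    exact ⟨hne, hobjφ, hA.of_comp.comp hAφ, hB.of_comp.comp hBφ⟩

theorem contraction_contraction_merger_assoc_general {P Q R : Type u} [Category.{v} P]
    [Category.{v} Q] [Category.{v} R] (hC : IsNestedGraph C) (hD : IsNestedGraph D)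
    (hE : IsNestedGraph E) {κ : C ⥤ D} (hκ : IsContraction κ) {φ : D ⥤ E}
    {μ' : D ⥤ P} {κ' : P ⥤ E} (hφ : IsCanonicalDecomp φ μ' κ')
    {ν : C ⥤ Q} {lam : Q ⥤ P} (hμ' : IsCanonicalDecomp (κ ⋙ μ') ν lam)
    {ρ : C ⥤ R} {σ : R ⥤ E} (hcomp : IsCanonicalDecomp (κ ⋙ φ) ρ σ) :
    PairEquiv ρ σ ν (lam ⋙ κ') := by
  have hν : IsQuotientBy (mergerRel (κ ⋙ φ)) ν := hκ.mergerRel_comp_eq hC hD hE hφ ▸ hμ'.1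
  refine hcomp.1.pairEquiv hν ?_
  calc
    ρ ⋙ σ = κ ⋙ φ := hcomp.2
    _ = (κ ⋙ μ') ⋙ κ' := by rw [Functor.assoc, hφ.2]
    _ = ν ⋙ lam ⋙ κ' := by rw [← hμ'.2, Functor.assoc]

end

/-- for contractions `κ₁, κ₂` and a merger `μ`, one has
`μ ∘ (κ₂ ∘ κ₁) = (μ ∘ κ₂) ∘ κ₁` in `NGr`: the canonical merger–contraction
decomposition `(ρ, σ)` of `μ ∘ (κ₂ ∘ κ₁)` coincides (up to shifting an isomorphism) with
the pair obtained by first canonically decomposing `μ ∘ κ₂` as `κ' ∘ μ'`, then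
canonically decomposing `μ' ∘ κ₁` as `lam ∘ ν` and composing the resulting contractions,
namely with the pair `(ν, lam ⋙ κ')`. -/
theorem contraction_contraction_merger_assoc {N₁ N₂ N₃ N₄ P Q R : Type u}
    [Category.{v} N₁] [Category.{v} N₂] [Category.{v} N₃] [Category.{v} N₄]
    [Category.{v} P] [Category.{v} Q] [Category.{v} R]
    (h₁ : IsNestedGraph N₁) (h₂ : IsNestedGraph N₂) (h₃ : IsNestedGraph N₃)
    (h₄ : IsNestedGraph N₄) (hP : IsNestedGraph P) (hQ : IsNestedGraph Q)
    (hR : IsNestedGraph R)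
    (κ₁ : N₁ ⥤ N₂) (κ₂ : N₂ ⥤ N₃) (μ : N₃ ⥤ N₄)
    (hκ₁ : IsContraction κ₁) (hκ₂ : IsContraction κ₂) (hμ : IsMerger μ)
    (μ' : N₂ ⥤ P) (κ' : P ⥤ N₄) (hd₁ : IsCanonicalDecomp (κ₂ ⋙ μ) μ' κ')
    (ν : N₁ ⥤ Q) (lam : Q ⥤ P) (hd₂ : IsCanonicalDecomp (κ₁ ⋙ μ') ν lam)
    (ρ : N₁ ⥤ R) (σ : R ⥤ N₄) (hd₃ : IsCanonicalDecomp ((κ₁ ⋙ κ₂) ⋙ μ) ρ σ) :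
    PairEquiv ρ σ ν (lam ⋙ κ') :=
  contraction_contraction_merger_assoc_general h₁ h₂ h₄ hκ₁ hd₁ hd₂ hd₃
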